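/- If a tensor sequence A_1, …, A_N generates a matrix-product unitary and is in canonical form, then for every k = 1, …, N and all physical indices j, j' ∈ {1,…,d}: ⟨Ω_{D_k}| (Σ_i conj(A_k^{ij'}) ⊗ A_k^{ij}) |ρ^{(k−1)}⟩ = δ_{jj'}, and ⟨Ω_{D_k}| (Σ_i conj(A_k^{ij'}) ⊗ A_k^{ij}) |X⟩ = 0 for every X ∈ 𝒮^{(k−1)}, where |Ω_D⟩ := Σ_{m=1}^{D} |m⟩ ⊗ |m⟩ ∈ ℂ^D ⊗ ℂ^D, and where for k = 1 one reads ρ^{(0)} = 1 and 𝒮^{(0)} = {0}. -/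

import Mathlib

open Matrix Kronecker

noncomputable section

/-- The partial matrix product `A_k^{i_k j_k} ⋯ A_1^{i_1 j_1}` of a tensor sequence
(sites are 0-based: `A m` is the tensor of site `m+1`). -/
def mpoProd (d : ℕ) (D : ℕ → ℕ)
    (A : ∀ k : ℕ, Fin d → Fin d → Matrix (Fin (D (k + 1))) (Fin (D k)) ℂ) :
    ∀ N : ℕ, (Fin N → Fin d) → (Fin N → Fin d) → Matrix (Fin (D N)) (Fin (D 0)) ℂ
  | 0, _, _ => 1
  | (N + 1), i, j =>
      A N (i (Fin.last N)) (j (Fin.last N)) *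
        mpoProd d D A N (fun t => i t.castSucc) (fun t => j t.castSucc)

/-- The matrix-product operator generated by the tensor sequence, acting on `(ℂ^d)^{⊗N}`;
since `D 0 = D N = 1`, the `1 × 1` boundary matrix is identified with a scalar by
summing its entries. -/
def mpoOp (d : ℕ) (D : ℕ → ℕ)
    (A : ∀ k : ℕ, Fin d → Fin d → Matrix (Fin (D (k + 1))) (Fin (D k)) ℂ) (N : ℕ) :
    Matrix (Fin N → Fin d) (Fin N → Fin d) ℂ :=
  Matrix.of fun i j => ∑ m, ∑ n, mpoProd d D A N i j m n

/-- `∑ i j j', M j' j • conj(A^{i j'}) ⊗ conj?  -- the building block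
`Σ_{i,j,j'} (M)_{j'j} · conj(A^{ij'}) ⊗ A^{ij}` (Kronecker product, entrywise conjugate). -/
def Smat {d Dl Dr : ℕ} (A : Fin d → Fin d → Matrix (Fin Dl) (Fin Dr) ℂ)
    (M : Matrix (Fin d) (Fin d) ℂ) : Matrix (Fin Dl × Fin Dl) (Fin Dr × Fin Dr) ℂ :=
  ∑ i, ∑ j, ∑ j', M j' j • (((A i j').map (starRingEnd ℂ)) ⊗ₖ (A i j))

/-- The transfer matrix `E^{(k+1)} = (1/d) Σ_{i,j} conj(A_k^{ij}) ⊗ A_k^{ij}`. -/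
def Esite (d : ℕ) (D : ℕ → ℕ)
    (A : ∀ k : ℕ, Fin d → Fin d → Matrix (Fin (D (k + 1))) (Fin (D k)) ℂ) (k : ℕ) :
    Matrix (Fin (D (k + 1)) × Fin (D (k + 1))) (Fin (D k) × Fin (D k)) ℂ :=
  ((d : ℂ))⁻¹ • Smat (A k) 1

/-- `S_α^{(k+1)}`, where `α = 0` carries the extra `1/d` factor (there `σ 0 = 𝟙`). -/
def Ssite (d : ℕ) (D : ℕ → ℕ)
    (A : ∀ k : ℕ, Fin d → Fin d → Matrix (Fin (D (k + 1))) (Fin (D k)) ℂ)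
    (σ : Fin (d * d) → Matrix (Fin d) (Fin d) ℂ) (k : ℕ) (α : Fin (d * d)) :
    Matrix (Fin (D (k + 1)) × Fin (D (k + 1))) (Fin (D k) × Fin (D k)) ℂ :=
  (if (α : ℕ) = 0 then ((d : ℂ))⁻¹ else 1) • Smat (A k) (σ α)

/-- The product `S_{α_N}^{(N)} ⋯ S_{α_1}^{(1)}`. -/
def Schain (d : ℕ) (D : ℕ → ℕ)
    (A : ∀ k : ℕ, Fin d → Fin d → Matrix (Fin (D (k + 1))) (Fin (D k)) ℂ)
    (σ : Fin (d * d) → Matrix (Fin d) (Fin d) ℂ) :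
    ∀ N : ℕ, (Fin N → Fin (d * d)) →
      Matrix (Fin (D N) × Fin (D N)) (Fin (D 0) × Fin (D 0)) ℂ
  | 0, _ => 1
  | (N + 1), α =>
      Ssite d D A σ N (α (Fin.last N)) * Schain d D A σ N (fun t => α t.castSucc)

/-- `ρ^{(N)} = E^{(N)} ⋯ E^{(1)}`. -/
def rhoChain (d : ℕ) (D : ℕ → ℕ)
    (A : ∀ k : ℕ, Fin d → Fin d → Matrix (Fin (D (k + 1))) (Fin (D k)) ℂ) :
    ∀ N : ℕ, Matrix (Fin (D N) × Fin (D N)) (Fin (D 0) × Fin (D 0)) ℂ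
  | 0 => 1
  | (N + 1) => Esite d D A N * rhoChain d D A N

/-- `𝒮^{(N)}`: the real span of all products `S_{α_N}^{(N)} ⋯ S_{α_1}^{(1)}` with some
`α_t ≠ 0`. -/
def Sspan (d : ℕ) (D : ℕ → ℕ)
    (A : ∀ k : ℕ, Fin d → Fin d → Matrix (Fin (D (k + 1))) (Fin (D k)) ℂ)
    (σ : Fin (d * d) → Matrix (Fin d) (Fin d) ℂ) (N : ℕ) :
    Submodule ℝ (Matrix (Fin (D N) × Fin (D N)) (Fin (D 0) × Fin (D 0)) ℂ) :=
  Submodule.span ℝ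
    {M | ∃ α : Fin N → Fin (d * d), (∃ t, (α t : ℕ) ≠ 0) ∧ M = Schain d D A σ N α}

/-- Identification of a vector in `ℂ^D ⊗ ℂ^D` (here: a `D² × 1` matrix, the column index
ranging over the trivial type `Fin (D 0) × Fin (D 0)` with `D 0 = 1`) with a `D × D`
matrix. -/
def matHat {Dk D0 : ℕ} (M : Matrix (Fin Dk × Fin Dk) (Fin D0 × Fin D0) ℂ) :
    Matrix (Fin Dk) (Fin Dk) ℂ :=
  Matrix.of fun m n => ∑ q, M (m, n) q

/-- The chain `Smat (A_k) (M_k) ⋯ Smat (A_1) (M_1)` for arbitrary physical matrices. -/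
def Mchain (d : ℕ) (D : ℕ → ℕ)
    (A : ∀ k : ℕ, Fin d → Fin d → Matrix (Fin (D (k + 1))) (Fin (D k)) ℂ) :
    ∀ N : ℕ, (Fin N → Matrix (Fin d) (Fin d) ℂ) →
      Matrix (Fin (D N) × Fin (D N)) (Fin (D 0) × Fin (D 0)) ℂ
  | 0, _ => 1
  | (N + 1), M =>
      Smat (A N) (M (Fin.last N)) * Mchain d D A N (fun t => M t.castSucc)

lemma sum_snoc {k d : ℕ} {V : Type*} [AddCommMonoid V] (f : (Fin (k + 1) → Fin d) → V) :
    ∑ x, f x = ∑ a : Fin d, ∑ x : Fin k → Fin d, f (Fin.snoc (α := fun _ => Fin d) x a) := by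
  rw [← (Fin.snocEquiv (fun _ : Fin (k + 1) => Fin d)).sum_comp, Fintype.sum_prod_type]
  rfl

lemma Mchain_expand (d : ℕ) (D : ℕ → ℕ)
    (A : ∀ k : ℕ, Fin d → Fin d → Matrix (Fin (D (k + 1))) (Fin (D k)) ℂ) (k : ℕ)
    (M : Fin k → Matrix (Fin d) (Fin d) ℂ) :
    Mchain d D A k M = ∑ i : Fin k → Fin d, ∑ J : Fin k → Fin d, ∑ J' : Fin k → Fin d,
      (∏ t, M t (J' t) (J t)) •
        (((mpoProd d D A k i J').map (starRingEnd ℂ)) ⊗ₖ (mpoProd d D A k i J)) := by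
  induction k with
  | zero =>
    simp [Mchain, mpoProd]
  | succ k ih =>
    rw [Mchain, ih, sum_snoc, Smat, Matrix.sum_mul]
    refine Finset.sum_congr rfl fun a _ => ?_
    have h1 : ∀ (i : Fin k → Fin d),
        (∑ J : Fin (k+1) → Fin d, ∑ J' : Fin (k+1) → Fin d,
          (∏ t, M t (J' t) (J t)) •
        (((mpoProd d D A (k+1) (Fin.snoc (α := fun _ => Fin d) i a) J').map (starRingEnd ℂ)) ⊗ₖ
          (mpoProd d D A (k+1) (Fin.snoc (α := fun _ => Fin d) i a) J))) =
        ∑ b, ∑ b', ∑ J : Fin k → Fin d, ∑ J' : Fin k → Fin d,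
          (M (Fin.last k) b' b • (((A k a b').map (starRingEnd ℂ)) ⊗ₖ (A k a b))) *
          ((∏ t : Fin k, M t.castSucc (J' t) (J t)) •
        (((mpoProd d D A k i J').map (starRingEnd ℂ)) ⊗ₖ (mpoProd d D A k i J))) := by
      intro i
      rw [sum_snoc]
      refine Finset.sum_congr rfl fun b _ => ?_
      conv_rhs => rw [Finset.sum_comm]
      refine Finset.sum_congr rfl fun J _ => ?_
      rw [sum_snoc]
      refine Finset.sum_congr rfl fun b' _ => Finset.sum_congr rfl fun J' _ => ?_
      rw [Fin.prod_univ_castSucc]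
      simp only [mpoProd, Fin.snoc_last, Fin.snoc_castSucc, Matrix.map_mul, mul_kronecker_mul,
        Matrix.smul_mul, Matrix.mul_smul, smul_smul]
    simp_rw [h1]
    conv_rhs => rw [Finset.sum_comm]
    rw [Matrix.sum_mul]
    refine Finset.sum_congr rfl fun b _ => ?_
    conv_rhs => rw [Finset.sum_comm]
    rw [Matrix.sum_mul]
    refine Finset.sum_congr rfl fun b' _ => ?_
    simp only [Matrix.mul_sum]

lemma omega_N (N d : ℕ) (D : ℕ → ℕ) (hD0 : D 0 = 1) (hDN : D N = 1)
    (A : ∀ k : ℕ, Fin d → Fin d → Matrix (Fin (D (k + 1))) (Fin (D k)) ℂ)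
    (hU : mpoOp d D A N ∈ Matrix.unitaryGroup (Fin N → Fin d) ℂ)
    (M : Fin N → Matrix (Fin d) (Fin d) ℂ) :
    ∑ m, ∑ q, Mchain d D A N M (m, m) q = ∏ t, (M t).trace := by
  have hU' := Matrix.mem_unitaryGroup_iff'.1 hU
  have : Unique (Fin (D 0)) := hD0 ▸ (inferInstance : Unique (Fin 1))
  have : Unique (Fin (D N)) := hDN ▸ (inferInstance : Unique (Fin 1))
  have hJ : ∀ J J' : Fin N → Fin d, ∑ i, starRingEnd ℂ (mpoProd d D A N i J' default default) *
      mpoProd d D A N i J default default = if J' = J then 1 else 0 := by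
    intro J J'
    have := congrFun (congrFun hU' J') J
    simpa [Matrix.mul_apply, Matrix.star_apply, mpoOp, Matrix.one_apply] using this
  rw [Mchain_expand]
  simp only [Fintype.sum_unique, Matrix.sum_apply, Matrix.smul_apply, kroneckerMap_apply,
    Matrix.map_apply, smul_eq_mul, Fintype.sum_prod_type]
  rw [Finset.sum_comm]
  have h2 : ∀ J : Fin N → Fin d, ∑ i, ∑ J' : Fin N → Fin d, (∏ t, M t (J' t) (J t)) *
      (starRingEnd ℂ (mpoProd d D A N i J' default default) *
      mpoProd d D A N i J default default) = ∏ t, M t (J t) (J t) := by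
    intro J
    rw [Finset.sum_comm]
    simp_rw [← Finset.mul_sum, hJ]
    simp
  rw [Finset.sum_congr rfl fun J _ => h2 J]
  simp only [Matrix.trace, Matrix.diag]
  rw [Finset.prod_univ_sum]
  simp

lemma omega_E (d : ℕ) {Dl Dr : ℕ} (A : Fin d → Fin d → Matrix (Fin Dl) (Fin Dr) ℂ)
    (hcan : ((d : ℂ))⁻¹ • ∑ i, ∑ j, (A i j)ᴴ * (A i j) = 1) (p : Fin Dr × Fin Dr) :
    ∑ m, Smat A ((d : ℂ)⁻¹ • 1) (m, m) p = if p.1 = p.2 then 1 else 0 := by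
  have := congrFun (congrFun hcan p.1) p.2
  rw [Matrix.one_apply] at this
  rw [← this]
  simp only [Smat, Matrix.sum_apply, Matrix.smul_apply, kroneckerMap_apply, Matrix.mul_apply,
    Matrix.map_apply, smul_eq_mul, Matrix.one_apply, Matrix.conjTranspose_apply, Finset.mul_sum]
  rw [Finset.sum_comm]
  refine Finset.sum_congr rfl fun i _ => ?_
  rw [Finset.sum_comm]
  refine Finset.sum_congr rfl fun j _ => ?_
  refine Finset.sum_congr rfl fun m _ => ?_
  simp

lemma omega_mul {a b c : ℕ} (S : Matrix (Fin a × Fin a) (Fin b × Fin b) ℂ)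
    (X : Matrix (Fin b × Fin b) (Fin c × Fin c) ℂ) :
    ∑ m, ∑ q, (S * X) (m, m) q = ∑ m, ∑ p, S (m, m) p * ∑ q, X p q := by
  refine Finset.sum_congr rfl fun m _ => ?_
  simp only [Matrix.mul_apply, Finset.mul_sum]
  rw [Finset.sum_comm]

lemma omega_chain (N d : ℕ) (hd : 2 ≤ d) (D : ℕ → ℕ) (hD0 : D 0 = 1) (hDN : D N = 1)
    (A : ∀ k : ℕ, Fin d → Fin d → Matrix (Fin (D (k + 1))) (Fin (D k)) ℂ)
    (hU : mpoOp d D A N ∈ Matrix.unitaryGroup (Fin N → Fin d) ℂ)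
    (hcan : ∀ k, k < N →
      ((d : ℂ))⁻¹ • ∑ i, ∑ j, (A k i j)ᴴ * (A k i j) = 1) (k : ℕ) (hk : k ≤ N) :
    ∀ M : Fin k → Matrix (Fin d) (Fin d) ℂ,
    ∑ m, ∑ q, Mchain d D A k M (m, m) q = ∏ t, (M t).trace := by
  induction hk using Nat.decreasingInduction with
  | self => exact omega_N N d D hD0 hDN A hU
  | of_succ k hk ih =>
    intro M
    have := ih (Fin.snoc (α := fun _ => Matrix (Fin d) (Fin d) ℂ) M ((d : ℂ)⁻¹ • 1))
    rw [Mchain, omega_mul, Fin.prod_univ_castSucc] at this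
    simp only [Fin.snoc_last, Fin.snoc_castSucc] at this
    have hd0 : (d : ℂ) ≠ 0 := by
      have : d ≠ 0 := by omega
      exact_mod_cast this
    rw [Finset.sum_comm] at this
    simp_rw [← Finset.sum_mul, omega_E d (A k) (hcan k hk)] at this
    simpa [Fintype.sum_prod_type, hd0] using this

lemma rho_eq (d : ℕ) (D : ℕ → ℕ)
    (A : ∀ k : ℕ, Fin d → Fin d → Matrix (Fin (D (k + 1))) (Fin (D k)) ℂ) (k : ℕ) :
    rhoChain d D A k = Mchain d D A k (fun _ => (d : ℂ)⁻¹ • 1) := by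
  induction k with
  | zero => rfl
  | succ k ih =>
    rw [rhoChain, Mchain, ih, Esite]
    congr 1
    simp [Smat, Finset.smul_sum, smul_smul]

lemma Schain_eq (d : ℕ) (D : ℕ → ℕ)
    (A : ∀ k : ℕ, Fin d → Fin d → Matrix (Fin (D (k + 1))) (Fin (D k)) ℂ)
    (σ : Fin (d * d) → Matrix (Fin d) (Fin d) ℂ) (k : ℕ) (α : Fin k → Fin (d * d)) :
    Schain d D A σ k α = Mchain d D A k
      (fun t => (if (α t : ℕ) = 0 then ((d : ℂ))⁻¹ else 1) • σ (α t)) := by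
  induction k with
  | zero => rfl
  | succ k ih =>
    rw [Schain, Mchain, ih, Ssite]
    congr 1
    simp only [Smat, Finset.smul_sum, smul_smul, Matrix.smul_apply, smul_eq_mul]

lemma T_eq {d Dl Dr : ℕ} (A : Fin d → Fin d → Matrix (Fin Dl) (Fin Dr) ℂ) (j j' : Fin d) :
    (∑ i, ((A i j').map (starRingEnd ℂ)) ⊗ₖ (A i j)) = Smat A (Matrix.single j' j 1) := by
  rw [Smat]
  refine Finset.sum_congr rfl fun i _ => ?_
  rw [Finset.sum_eq_single j, Finset.sum_eq_single j']
  · simp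
  · intro b _ hb
    simp [Matrix.single_apply, hb.symm]
  · simp
  · intro b _ hb
    simp [Matrix.single_apply, hb.symm]
  · simp

/-- If a tensor sequence generates a matrix-product unitary and is in
canonical form, then for every site `k` (0-based: `ℓ < N`, tensor `A ℓ`) and all physical
indices `j, j'`: `⟨Ω| (Σ_i conj(A^{ij'}) ⊗ A^{ij}) |ρ^{(ℓ)}⟩ = δ_{jj'}` and
`⟨Ω| (Σ_i conj(A^{ij'}) ⊗ A^{ij}) |X⟩ = 0` for every `X ∈ 𝒮^{(ℓ)}`, where
`|Ω_D⟩ = Σ_m |m⟩ ⊗ |m⟩`. -/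
theorem stmt_2 (N d : ℕ) (hN : 1 ≤ N) (hd : 2 ≤ d) (D : ℕ → ℕ)
    (hD0 : D 0 = 1) (hDN : D N = 1) (hDpos : ∀ k, k ≤ N → 1 ≤ D k)
    (A : ∀ k : ℕ, Fin d → Fin d → Matrix (Fin (D (k + 1))) (Fin (D k)) ℂ)
    (σ : Fin (d * d) → Matrix (Fin d) (Fin d) ℂ)
    (hσ0 : ∀ α : Fin (d * d), (α : ℕ) = 0 → σ α = 1)
    (hσherm : ∀ α : Fin (d * d), (α : ℕ) ≠ 0 → (σ α).IsHermitian)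
    (hσtr : ∀ α : Fin (d * d), (α : ℕ) ≠ 0 → (σ α).trace = 0)
    (hσorth : ∀ α β : Fin (d * d), (α : ℕ) ≠ 0 → (β : ℕ) ≠ 0 →
      (σ α * σ β).trace = if α = β then 1 else 0)
    (hσbasis : Submodule.span ℂ (Set.range σ) = ⊤)
    (hU : mpoOp d D A N ∈ Matrix.unitaryGroup (Fin N → Fin d) ℂ)
    (hcan : ∀ k, k < N →
      ((d : ℂ))⁻¹ • ∑ i, ∑ j, (A k i j)ᴴ * (A k i j) = 1) :
    ∀ ℓ, ℓ < N → ∀ j j' : Fin d,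
      ((∑ m : Fin (D (ℓ + 1)), ∑ p : Fin (D ℓ) × Fin (D ℓ),
          (∑ i, ((A ℓ i j').map (starRingEnd ℂ)) ⊗ₖ (A ℓ i j)) (m, m) p *
            (∑ q, rhoChain d D A ℓ p q)) = if j = j' then 1 else 0) ∧
      (∀ X ∈ Sspan d D A σ ℓ,
        (∑ m : Fin (D (ℓ + 1)), ∑ p : Fin (D ℓ) × Fin (D ℓ),
          (∑ i, ((A ℓ i j').map (starRingEnd ℂ)) ⊗ₖ (A ℓ i j)) (m, m) p *
            (∑ q, X p q)) = 0) := by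
  intro ℓ hℓ j j'
  have hd0 : (d : ℂ) ≠ 0 := by
    have : d ≠ 0 := by omega
    exact_mod_cast this
  have key : ∀ M : Fin ℓ → Matrix (Fin d) (Fin d) ℂ,
      (∑ m : Fin (D (ℓ + 1)), ∑ p : Fin (D ℓ) × Fin (D ℓ),
          (∑ i, ((A ℓ i j').map (starRingEnd ℂ)) ⊗ₖ (A ℓ i j)) (m, m) p *
            (∑ q, Mchain d D A ℓ M p q)) =
        (∏ t, (M t).trace) * if j = j' then 1 else 0 := by
    intro M
    have := omega_chain N d hd D hD0 hDN A hU hcan (ℓ + 1) hℓ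
      (Fin.snoc (α := fun _ => Matrix (Fin d) (Fin d) ℂ) M (Matrix.single j' j 1))
    rw [Mchain, Fin.prod_univ_castSucc] at this
    simp only [Fin.snoc_last, Fin.snoc_castSucc] at this
    rw [T_eq, ← omega_mul, this]
    congr 1
    split_ifs with h
    · subst h
      simp
    · exact Matrix.trace_single_eq_of_ne _ _ _ (Ne.symm h)
  refine ⟨?_, ?_⟩
  · rw [rho_eq, key]
    simp [hd0]
  · intro X hX
    rw [← omega_mul]
    induction hX using Submodule.span_induction with
    | mem X hX =>
      obtain ⟨α, ⟨t, ht⟩, rfl⟩ := hX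
      rw [omega_mul, Schain_eq, key, Finset.prod_eq_zero (Finset.mem_univ t), zero_mul]
      rw [Matrix.trace_smul, hσtr _ ht, smul_zero]
    | zero => simp
    | add x y _ _ hx hy =>
      simp only [Matrix.mul_add, Matrix.add_apply, Finset.sum_add_distrib, hx, hy, add_zero]
    | smul a x _ hx =>
      simp only [Matrix.mul_smul, Matrix.smul_apply, ← Finset.smul_sum, hx, smul_zero]

end
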